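/- arXiv:2306.07008 — 9 statements merged into one kernel-verified Lean document; each statement's English description precedes it below -/
import Mathlib

section
/- For every positive integer N and every real number ν, the Dirichlet kernel satisfies 1 − D_N(ν) ≤ π²ν²/6, and consequently 1 − D_N(ν)² ≤ π²ν²/3. -/
/-- The Dirichlet kernel `D_N(ν) = (1/N) ∑_{m=0}^{N-1} cos(π ν (2m+1-N)/N)`. -/
noncomputable def dirichlet (N : ℕ) (ν : ℝ) : ℝ :=
  (1 / (N : ℝ)) * ∑ m ∈ Finset.range N,
    Real.cos (Real.pi * ν * (2 * (m : ℝ) + 1 - (N : ℝ)) / (N : ℝ))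

/-!
The inequality `1 - x ^ 2 / 2 ≤ cos x` is averaged over the angles `(2 * m + 1 - N) * π * ν / N`,
whose multipliers `2 * m + 1 - N` have mean square `(N ^ 2 - 1) / 3`. The bound on
`1 - D_N(ν) ^ 2 = 2 * (1 - D_N(ν)) - (1 - D_N(ν)) ^ 2` follows by dropping the last square.
-/

open Finset Real

/-- The right-hand side is `3 * n` times variance plus squared bias: `1, 3, …, 2 * n - 1`
have mean `n` and variance `(n ^ 2 - 1) / 3`. -/
theorem three_mul_sum_range_odd_sub_sq {R : Type*} [CommRing R] (n : ℕ) (c : R) :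
    3 * ∑ m ∈ range n, (2 * (m : R) + 1 - c) ^ 2 =
      n * ((n : R) ^ 2 - 1) + 3 * n * ((n : R) - c) ^ 2 := by
  induction n with
  | zero => simp
  | succ n ih =>
    rw [sum_range_succ, mul_add, ih]
    push_cast
    ring

theorem card_sub_sum_sq_div_two_le_sum_cos {ι : Type*} (s : Finset ι) (x : ι → ℝ) :
    (#s : ℝ) - (∑ i ∈ s, x i ^ 2) / 2 ≤ ∑ i ∈ s, cos (x i) :=
  calc (#s : ℝ) - (∑ i ∈ s, x i ^ 2) / 2
      = ∑ i ∈ s, (1 - x i ^ 2 / 2) := by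
        rw [sum_sub_distrib, sum_div, sum_const, nsmul_one]
    _ ≤ ∑ i ∈ s, cos (x i) := sum_le_sum fun _ _ ↦ one_sub_sq_div_two_le_cos

theorem sub_mul_sq_le_sum_range_cos (n : ℕ) (θ : ℝ) :
    n - n * ((n : ℝ) ^ 2 - 1) / 6 * θ ^ 2 ≤ ∑ m ∈ range n, cos (θ * (2 * (m : ℝ) + 1 - n)) := by
  have sum_sq : ∑ m ∈ range n, (θ * (2 * (m : ℝ) + 1 - n)) ^ 2 =
      n * ((n : ℝ) ^ 2 - 1) / 3 * θ ^ 2 := by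
    simp only [mul_pow, ← mul_sum]
    linear_combination θ ^ 2 / 3 * three_mul_sum_range_odd_sub_sq n (n : ℝ)
  calc n - n * ((n : ℝ) ^ 2 - 1) / 6 * θ ^ 2
      = #(range n) - (∑ m ∈ range n, (θ * (2 * (m : ℝ) + 1 - n)) ^ 2) / 2 := by
        rw [sum_sq, card_range]
        ring
    _ ≤ ∑ m ∈ range n, cos (θ * (2 * (m : ℝ) + 1 - n)) :=
        card_sub_sum_sq_div_two_le_sum_cos _ _

theorem dirichlet_eq_sum_cos_div (N : ℕ) (ν : ℝ) :
    dirichlet N ν = (∑ m ∈ range N, cos (π * ν / N * (2 * (m : ℝ) + 1 - N))) / N := by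
  simp only [dirichlet, one_div_mul_eq_div, mul_div_right_comm]

theorem one_sub_dirichlet_le {N : ℕ} (hN : 0 < N) (ν : ℝ) :
    1 - dirichlet N ν ≤ π ^ 2 * ν ^ 2 / 6 * (1 - 1 / (N : ℝ) ^ 2) := by
  have hN' : (0 : ℝ) < N := mod_cast hN
  rw [sub_le_comm, dirichlet_eq_sum_cos_div, le_div_iff₀ hN']
  refine le_of_eq_of_le ?_ (sub_mul_sq_le_sum_range_cos N (π * ν / N))
  field_simp

/-- For every positive integer `N` and real `ν`, `1 - D_N(ν) ≤ π²ν²/6` and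
consequently `1 - D_N(ν)² ≤ π²ν²/3`. -/
theorem dirichlet_one_sub_le (N : ℕ) (hN : 0 < N) (ν : ℝ) :
    1 - dirichlet N ν ≤ Real.pi ^ 2 * ν ^ 2 / 6 ∧
    1 - (dirichlet N ν) ^ 2 ≤ Real.pi ^ 2 * ν ^ 2 / 3 := by
  have h : 1 - dirichlet N ν ≤ π ^ 2 * ν ^ 2 / 6 :=
    (one_sub_dirichlet_le hN ν).trans <|
      mul_le_of_le_one_right (by positivity) (sub_le_self 1 (by positivity))
  refine ⟨h, ?_⟩
  calc 1 - dirichlet N ν ^ 2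
      = 2 * (1 - dirichlet N ν) - (1 - dirichlet N ν) ^ 2 := by ring
    _ ≤ 2 * (1 - dirichlet N ν) := sub_le_self _ (sq_nonneg _)
    _ ≤ π ^ 2 * ν ^ 2 / 3 := by linarith
end

section
/- For every positive integer N, every integer n, and every real ν with |ν| ≤ 1/2, if 0 < |n + ν| ≤ N/2 then |D_N(n + ν)| ≤ π|ν| / (2|n + ν|). -/
section

open Real

theorem two_mul_sin_mul_sum_cos (a θ : ℝ) (N : ℕ) :
    2 * sin θ * ∑ m ∈ Finset.range N, cos (a + (2 * m + 1) * θ) =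
      sin (a + 2 * N * θ) - sin a := by
  have telescoping_term (m : ℕ) : 2 * sin θ * cos (a + (2 * m + 1) * θ) =
      sin (a + 2 * (m + 1 : ℕ) * θ) - sin (a + 2 * m * θ) := by
    rw [sin_sub_sin]
    push_cast
    ring_nf
  simp only [Finset.mul_sum, telescoping_term]
  simpa using Finset.sum_range_sub (fun m : ℕ ↦ sin (a + 2 * m * θ)) N

theorem mul_sin_mul_dirichlet {N : ℕ} (hN : N ≠ 0) (x : ℝ) :
    N * sin (π * x / N) * dirichlet N x = sin (π * x) := by
  have hN' : (N : ℝ) ≠ 0 := Nat.cast_ne_zero.mpr hN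
  have summand_eq (m : ℕ) : cos (π * x * (2 * m + 1 - N) / N) =
      cos (-(π * x) + (2 * m + 1) * (π * x / N)) := by
    congr 1
    field_simp
    ring
  have endpoint_eq : -(π * x) + 2 * N * (π * x / N) = π * x := by
    field_simp
    ring
  have telescoped := two_mul_sin_mul_sum_cos (-(π * x)) (π * x / N) N
  rw [endpoint_eq, sin_neg] at telescoped
  simp only [dirichlet, summand_eq]
  calc N * sin (π * x / N) *
        (1 / N * ∑ m ∈ Finset.range N, cos (-(π * x) + (2 * m + 1) * (π * x / N)))
      = sin (π * x / N) * ∑ m ∈ Finset.range N, cos (-(π * x) + (2 * m + 1) * (π * x / N)) := by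
        rw [← mul_assoc, mul_right_comm (N : ℝ), mul_one_div_cancel hN', one_mul]
    _ = sin (π * x) := by linarith

theorem two_mul_abs_le_mul_abs_sin {R x : ℝ} (hR : 0 < R) (hx : |x| ≤ R / 2) :
    2 * |x| ≤ R * |sin (π * x / R)| := by
  have abs_angle : |π * x / R| = π * |x| / R := by
    rw [abs_div, abs_mul, abs_of_pos pi_pos, abs_of_pos hR]
  have angle_le : |π * x / R| ≤ π / 2 := by
    rw [abs_angle, div_le_iff₀ hR]
    linarith [mul_le_mul_of_nonneg_left hx pi_pos.le]
  calc 2 * |x| = R * (2 / π * |π * x / R|) := by rw [abs_angle]; field_simp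
    _ ≤ R * |sin (π * x / R)| := by gcongr; exact mul_abs_le_abs_sin angle_le

theorem abs_dirichlet_mul_le_abs_sin {N : ℕ} (hN : N ≠ 0) {x : ℝ} (hx : |x| ≤ N / 2) :
    |dirichlet N x| * (2 * |x|) ≤ |sin (π * x)| :=
  calc |dirichlet N x| * (2 * |x|) ≤ |dirichlet N x| * (N * |sin (π * x / N)|) :=
        mul_le_mul_of_nonneg_left (two_mul_abs_le_mul_abs_sin (by positivity) hx) (abs_nonneg _)
    _ = |sin (π * x)| := by
        rw [← mul_sin_mul_dirichlet hN, abs_mul, abs_mul, Nat.abs_cast, mul_comm]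

theorem abs_sin_add_int_mul_pi (x : ℝ) (n : ℤ) : |sin (x + n * π)| = |sin x| := by
  rw [sin_add_int_mul_pi, abs_mul, abs_neg_one_zpow, one_mul]

theorem abs_sin_pi_mul_int_add_le (n : ℤ) (ν : ℝ) : |sin (π * (n + ν))| ≤ π * |ν| :=
  calc |sin (π * (n + ν))| = |sin (π * ν + n * π)| := by ring_nf
    _ = |sin (π * ν)| := abs_sin_add_int_mul_pi _ n
    _ ≤ |π * ν| := abs_sin_le_abs
    _ = π * |ν| := by rw [abs_mul, abs_of_pos pi_pos]

theorem abs_dirichlet_le_general (N : ℕ) (n : ℤ) (ν : ℝ) (hpos : 0 < |(n : ℝ) + ν|)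
    (hle : |(n : ℝ) + ν| ≤ N / 2) :
    |dirichlet N (n + ν)| ≤ π * |ν| / (2 * |(n : ℝ) + ν|) := by
  have hN : N ≠ 0 := by
    rintro rfl
    exact absurd (hpos.trans_le hle) (by simp)
  rw [le_div_iff₀ (by positivity)]
  exact (abs_dirichlet_mul_le_abs_sin hN hle).trans (abs_sin_pi_mul_int_add_le n ν)

end

/-- For every positive integer `N`, integer `n`, and real `ν` with `|ν| ≤ 1/2`,
if `0 < |n + ν| ≤ N/2` then `|D_N(n + ν)| ≤ π|ν| / (2|n + ν|)`. -/
theorem abs_dirichlet_le (N : ℕ) (hN : 0 < N) (n : ℤ) (ν : ℝ) (hν : |ν| ≤ 1 / 2)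
    (hpos : 0 < |(n : ℝ) + ν|) (hle : |(n : ℝ) + ν| ≤ (N : ℝ) / 2) :
    |dirichlet N ((n : ℝ) + ν)| ≤ Real.pi * |ν| / (2 * |(n : ℝ) + ν|) :=
  abs_dirichlet_le_general N n ν hpos hle
end

section
/- Fix a positive integer N and a real number ν. Then Σ_{n=0}^{N−1} D_N(n + ν)² = 1, and for every integer l with 1 ≤ l ≤ N − 1 one has Σ_{n=0}^{N−1} D_N(n + ν)·D_N(n + ν + l) = 0. -/
/-!
`D_N` is the average of the cosines with frequencies `θ_m = π(2m+1-N)/N`. These frequencies are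
symmetric about `0` and differ by multiples of `2π/N`, so averaging over `N` consecutive integer
translates kills every cross term and leaves the reproducing identity
`∑ₙ D_N(n + x) D_N(n + y) = D_N(y - x)`. Finally, `D_N` equals `1` at `0` and vanishes at every
integer which is not a multiple of `N`, since there it is a sum over a full period.
-/

open Finset Real

theorem sum_cos_two_pi_mul_int_div_eq_zero {N : ℕ} {j : ℤ} (hj : ¬ (N : ℤ) ∣ j) (c : ℝ) :
    ∑ n ∈ range N, cos (2 * π * j / N * n + c) = 0 := by
  rcases eq_or_ne N 0 with rfl | hN
  · simp
  have hN' : (N : ℝ) ≠ 0 := Nat.cast_ne_zero.mpr hN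
  have not_period : ∀ k : ℤ, 2 * π * j / N ≠ k * (2 * π) := by
    intro k hk
    have hjk : (j : ℝ) = N * k := by
      field_simp at hk
      linarith
    exact hj ⟨k, mod_cast hjk⟩
  have half_angle : N * (2 * π * j / N) / 2 = j * π := by field_simp
  rw [sum_cos N not_period, half_angle, sin_int_mul_pi, zero_mul, zero_div]

/-- The `m`-th frequency `θ_m = π(2m+1-N)/N` of the Dirichlet kernel `D_N`, so that
`D_N(x) = (1/N) ∑_{m<N} cos(θ_m x)`. The subtraction is taken in `ℝ`, so the frequencies with
`2m + 1 < N` are negative. -/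
noncomputable def dirichletFreq (N m : ℕ) : ℝ :=
  π * (2 * (m : ℝ) + 1 - (N : ℝ)) / (N : ℝ)

theorem dirichlet_eq_sum_cos_dirichletFreq (N : ℕ) (x : ℝ) :
    dirichlet N x = 1 / (N : ℝ) * ∑ m ∈ range N, cos (dirichletFreq N m * x) := by
  unfold dirichlet dirichletFreq
  congr! 3
  ring

theorem dirichletFreq_sub_dirichletFreq (N k m : ℕ) :
    dirichletFreq N k - dirichletFreq N m = 2 * π * ((k - m : ℤ) : ℝ) / N := by
  unfold dirichletFreq
  push_cast
  ring

theorem dirichletFreq_reflect {N m : ℕ} (hm : m < N) :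
    dirichletFreq N (N - 1 - m) = -dirichletFreq N m := by
  have hcast : ((N - 1 - m : ℕ) : ℝ) = N - 1 - m := by
    rw [Nat.cast_sub (by omega), Nat.cast_pred (by omega)]
  rw [dirichletFreq, dirichletFreq, hcast]
  ring

theorem sum_cos_dirichletFreq_sub {N k m : ℕ} (hk : k < N) (hm : m < N) (c : ℝ) :
    ∑ n ∈ range N, cos ((dirichletFreq N k - dirichletFreq N m) * n + c) =
      if k = m then N * cos c else 0 := by
  split_ifs with hkm
  · simp [hkm]
  · have not_dvd : ¬ (N : ℤ) ∣ k - m := fun hdvd ↦ by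
      have := Int.eq_zero_of_abs_lt_dvd hdvd (by rw [abs_lt]; omega)
      omega
    rw [dirichletFreq_sub_dirichletFreq]
    exact sum_cos_two_pi_mul_int_div_eq_zero not_dvd c

theorem sum_sin_dirichletFreq_mul (N : ℕ) (x : ℝ) :
    ∑ m ∈ range N, sin (dirichletFreq N m * x) = 0 := by
  have eq_neg : ∑ m ∈ range N, sin (dirichletFreq N m * x) =
      -∑ m ∈ range N, sin (dirichletFreq N m * x) := by
    rw [← sum_neg_distrib]
    refine (sum_range_reflect _ N).symm.trans (sum_congr rfl fun m hm ↦ ?_)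
    rw [dirichletFreq_reflect (mem_range.mp hm), neg_mul, sin_neg]
  linarith

theorem dirichlet_mul_dirichlet (N : ℕ) (x y : ℝ) :
    dirichlet N x * dirichlet N y = (1 / (N : ℝ)) ^ 2 *
      ∑ k ∈ range N, ∑ m ∈ range N, cos (dirichletFreq N k * y - dirichletFreq N m * x) := by
  simp only [dirichlet_eq_sum_cos_dirichletFreq, cos_sub, sum_add_distrib, ← mul_sum, ← sum_mul,
    sum_sin_dirichletFreq_mul]
  ring

theorem dirichlet_zero {N : ℕ} (hN : N ≠ 0) : dirichlet N 0 = 1 := by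
  simp [dirichlet, hN]

theorem dirichlet_intCast_eq_zero {N : ℕ} {l : ℤ} (hl : ¬ (N : ℤ) ∣ l) : dirichlet N l = 0 := by
  have freq_mul (m : ℕ) :
      dirichletFreq N m * l = 2 * π * l / N * m + π * l * (1 - N) / N := by
    unfold dirichletFreq
    ring
  simp only [dirichlet_eq_sum_cos_dirichletFreq, freq_mul,
    sum_cos_two_pi_mul_int_div_eq_zero hl, mul_zero]

theorem dirichlet_orthogonality_general {N : ℕ} (hN : N ≠ 0) (x y : ℝ) :
    ∑ n ∈ range N, dirichlet N (n + x) * dirichlet N (n + y) = dirichlet N (y - x) := by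
  have phase (k m n : ℕ) : dirichletFreq N k * (n + y) - dirichletFreq N m * (n + x) =
      (dirichletFreq N k - dirichletFreq N m) * n +
        (dirichletFreq N k * y - dirichletFreq N m * x) := by ring
  have inner_sum : ∀ k ∈ range N,
      ∑ m ∈ range N, ∑ n ∈ range N,
        cos (dirichletFreq N k * (n + y) - dirichletFreq N m * (n + x)) =
      N * cos (dirichletFreq N k * (y - x)) := by
    intro k hk
    calc
      _ = ∑ m ∈ range N,
          if k = m then N * cos (dirichletFreq N k * y - dirichletFreq N m * x) else 0 := by
        refine sum_congr rfl fun m hm ↦ ?_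
        simp only [phase, sum_cos_dirichletFreq_sub (mem_range.mp hk) (mem_range.mp hm)]
      _ = N * cos (dirichletFreq N k * (y - x)) := by
        rw [sum_ite_eq, if_pos hk, mul_sub]
  calc
    _ = (1 / (N : ℝ)) ^ 2 * ∑ k ∈ range N, ∑ m ∈ range N, ∑ n ∈ range N,
        cos (dirichletFreq N k * (n + y) - dirichletFreq N m * (n + x)) := by
      simp only [dirichlet_mul_dirichlet, ← mul_sum]
      rw [sum_comm]
      congr! 2
      exact sum_comm
    _ = (1 / (N : ℝ)) ^ 2 * (N * ∑ k ∈ range N, cos (dirichletFreq N k * (y - x))) := by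
      rw [sum_congr rfl inner_sum, ← mul_sum]
    _ = dirichlet N (y - x) := by
      have hN' : (N : ℝ) ≠ 0 := Nat.cast_ne_zero.mpr hN
      rw [dirichlet_eq_sum_cos_dirichletFreq, ← mul_assoc]
      congr 1
      field_simp

/-- For a positive integer `N` and real `ν`: `∑_{n=0}^{N-1} D_N(n+ν)² = 1` and, for every
integer `l` with `1 ≤ l ≤ N-1`, `∑_{n=0}^{N-1} D_N(n+ν) D_N(n+ν+l) = 0`. -/
theorem dirichlet_orthogonality (N : ℕ) (hN : 0 < N) (ν : ℝ) :
    (∑ n ∈ Finset.range N, (dirichlet N ((n : ℝ) + ν)) ^ 2 = 1) ∧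
    (∀ l : ℕ, 1 ≤ l → l ≤ N - 1 →
      ∑ n ∈ Finset.range N,
        dirichlet N ((n : ℝ) + ν) * dirichlet N ((n : ℝ) + ν + (l : ℝ)) = 0) := by
  refine ⟨?_, fun l hl_pos hl_le ↦ ?_⟩
  · simp only [sq, dirichlet_orthogonality_general hN.ne', sub_self, dirichlet_zero hN.ne']
  · have not_dvd : ¬ N ∣ l := Nat.not_dvd_of_pos_of_lt hl_pos (by omega)
    simpa only [add_assoc, dirichlet_orthogonality_general hN.ne', add_sub_cancel_left,
      Int.cast_natCast] using
        dirichlet_intCast_eq_zero (Int.natCast_dvd_natCast.not.mpr not_dvd)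
end

section
/- For every integer N ≥ 100 and every real ν with 0 < |ν| ≤ 1/2, the tail of the Dirichlet kernel satisfies Σ_{k=1}^{N−1} |D_N(k + ν)| ≤ π²|ν|·ln N. Consequently ‖s_ν‖₁ ≤ |s_{ν,0}| + π²|ν|·ln N and ‖c_ν‖₁ ≤ |c_{ν,0}| + π²|ν|·ln N. -/
/-- The vector `s_ν ∈ ℝ^N`, `s_{ν,k} = sin(π_N (k+ν)) D_N(k+ν)` with `π_N = π(1-1/N)`. -/
noncomputable def sVec (N : ℕ) (ν : ℝ) (k : ℕ) : ℝ :=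
  Real.sin (Real.pi * (1 - 1 / (N : ℝ)) * ((k : ℝ) + ν)) * dirichlet N ((k : ℝ) + ν)

/-- The vector `c_ν ∈ ℝ^N`, `c_{ν,k} = cos(π_N (k+ν)) D_N(k+ν)` with `π_N = π(1-1/N)`. -/
noncomputable def cVec (N : ℕ) (ν : ℝ) (k : ℕ) : ℝ :=
  Real.cos (Real.pi * (1 - 1 / (N : ℝ)) * ((k : ℝ) + ν)) * dirichlet N ((k : ℝ) + ν)

/-!
The closed form of the kernel and `sin (π y) ≥ 2 y (1 - y)` on `[0, 1]` give
`|D_N(x)| ≤ |sin (π x)| / 2 * (1 / x + 1 / (N - x))` on `(0, N)`. At `x = k + ν` with `|ν| ≤ 1 / 2`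
we have `|sin (π x)| ≤ π |ν|`, while `x ≥ k / 2` and `N - x ≥ (N - k) / 2`. Summing over `k`
bounds the tail by `2 π |ν|` times the harmonic number `H_{N-1}`, and `H_{N-1} ≤ (π / 2) log N`
by induction, since `1 / n ≤ (π / 2) log (1 + 1 / n)`.
-/

open Finset Real

lemma two_mul_sin_mul_sum_range_cos (θ c : ℝ) (n : ℕ) :
    2 * sin θ * ∑ m ∈ range n, cos (θ * (2 * m + 1) - c) = sin (2 * n * θ - c) + sin c := by
  have telescoping (m : ℕ) : 2 * sin θ * cos (θ * (2 * m + 1) - c) =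
      sin (2 * (m + 1 : ℕ) * θ - c) - sin (2 * m * θ - c) := by
    rw [two_mul_sin_mul_cos, ← neg_sub (θ * (2 * m + 1) - c) θ, sin_neg]
    push_cast
    ring_nf
  simp only [mul_sum, telescoping]
  rw [sum_range_sub (fun m : ℕ ↦ sin (2 * m * θ - c))]
  simp

lemma sin_mul_natCast_mul_dirichlet {N : ℕ} (hN : N ≠ 0) (x : ℝ) :
    sin (π * (x / N)) * (N * dirichlet N x) = sin (π * x) := by
  have hN' : (N : ℝ) ≠ 0 := by exact_mod_cast hN
  have sum_form : N * dirichlet N x =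
      ∑ m ∈ range N, cos (π * (x / N) * (2 * m + 1) - π * x) := by
    rw [dirichlet, ← mul_assoc, mul_one_div_cancel hN', one_mul]
    refine sum_congr rfl fun m _ ↦ congrArg cos ?_
    field_simp
  have closed_form := two_mul_sin_mul_sum_range_cos (π * (x / N)) (π * x) N
  rw [← sum_form, show 2 * N * (π * (x / N)) - π * x = π * x by field_simp; ring] at closed_form
  linarith

lemma two_mul_mul_one_sub_le_sin_pi_mul {y : ℝ} (hy₀ : 0 ≤ y) (hy₁ : y ≤ 1) :
    2 * y * (1 - y) ≤ sin (π * y) := by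
  have jordan {z : ℝ} (hz₀ : 0 ≤ z) (hz : z ≤ 1 / 2) : 2 * z ≤ sin (π * z) := by
    calc 2 * z = 2 / π * (π * z) := by field_simp
      _ ≤ sin (π * z) := mul_le_sin (by positivity) (by nlinarith [pi_pos])
  rcases le_total y (1 / 2) with hy | hy
  · nlinarith [jordan hy₀ hy]
  · have reflected : 2 * (1 - y) ≤ sin (π * y) := by
      rw [← sin_pi_sub, ← mul_one_sub]
      exact jordan (by linarith) (by linarith)
    nlinarith

lemma abs_dirichlet_le_s3 {N : ℕ} {x : ℝ} (hx₀ : 0 < x) (hxN : x < N) :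
    |dirichlet N x| ≤ |sin (π * x)| / 2 * (x⁻¹ + (N - x)⁻¹) := by
  have hN : (0 : ℝ) < N := hx₀.trans hxN
  have hNx : 0 < N - x := sub_pos.mpr hxN
  have sin_lower : 2 * (x / N) * (1 - x / N) ≤ |sin (π * (x / N))| :=
    (two_mul_mul_one_sub_le_sin_pi_mul (by positivity) ((div_le_one hN).mpr hxN.le)).trans
      (le_abs_self _)
  calc |dirichlet N x|
      = 2 * (x / N) * (1 - x / N) * (N * |dirichlet N x|) / 2 * (x⁻¹ + (N - x)⁻¹) := by
        field_simp
        ring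
    _ ≤ |sin (π * (x / N))| * (N * |dirichlet N x|) / 2 * (x⁻¹ + (N - x)⁻¹) := by gcongr
    _ = |sin (π * x)| / 2 * (x⁻¹ + (N - x)⁻¹) := by
        rw [← sin_mul_natCast_mul_dirichlet (Nat.cast_ne_zero.mp hN.ne') x, abs_mul, abs_mul,
          Nat.abs_cast]

lemma abs_sin_pi_mul_natCast_add_le (k : ℕ) (ν : ℝ) : |sin (π * (k + ν))| ≤ π * |ν| :=
  calc |sin (π * (k + ν))| = |sin (π * ν)| := by
        rw [mul_add, add_comm, mul_comm π k, sin_add_nat_mul_pi, abs_mul, abs_neg_one_pow, one_mul]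
    _ ≤ |π * ν| := abs_sin_le_abs
    _ = π * |ν| := by rw [abs_mul, abs_of_pos pi_pos]

lemma abs_dirichlet_natCast_add_le {N k : ℕ} {ν : ℝ} (hk : 1 ≤ k) (hkN : k < N)
    (hν : |ν| ≤ 1 / 2) :
    |dirichlet N (k + ν)| ≤ π * |ν| * ((k : ℝ)⁻¹ + (N - k : ℝ)⁻¹) := by
  have hk' : (1 : ℝ) ≤ k := by exact_mod_cast hk
  have hkN' : (k : ℝ) + 1 ≤ N := by exact_mod_cast hkN
  obtain ⟨hν_lower, hν_upper⟩ := abs_le.mp hν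
  have left_inv : ((k : ℝ) + ν)⁻¹ ≤ ((k : ℝ) / 2)⁻¹ := by gcongr; linarith
  have right_inv : (N - (k + ν) : ℝ)⁻¹ ≤ ((N - k : ℝ) / 2)⁻¹ :=
    inv_anti₀ (by linarith) (by linarith)
  calc |dirichlet N (k + ν)|
      ≤ |sin (π * (k + ν))| / 2 * (((k : ℝ) + ν)⁻¹ + (N - (k + ν))⁻¹) :=
        abs_dirichlet_le_s3 (by linarith) (by linarith)
    _ ≤ π * |ν| / 2 * (((k : ℝ) / 2)⁻¹ + ((N - k : ℝ) / 2)⁻¹) :=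
        mul_le_mul (by linarith [abs_sin_pi_mul_natCast_add_le k ν]) (add_le_add left_inv right_inv)
          (add_nonneg (inv_nonneg.mpr (by linarith)) (inv_nonneg.mpr (by linarith)))
          (by positivity)
    _ = π * |ν| * ((k : ℝ)⁻¹ + (N - k : ℝ)⁻¹) := by
        rw [inv_div, inv_div]
        ring

lemma sum_Icc_one_inv_add_inv_sub {K : Type*} [DivisionRing K] [CharZero K] (n : ℕ) :
    ∑ k ∈ Icc 1 n, ((k : K)⁻¹ + ((n + 1 : ℕ) - k : K)⁻¹) = 2 * (harmonic n : K) := by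
  have reflect : ∑ k ∈ Icc 1 n, ((n + 1 : ℕ) - k : K)⁻¹ = ∑ k ∈ Icc 1 n, (k : K)⁻¹ := by
    refine sum_nbij' (n + 1 - ·) (n + 1 - ·) ?_ ?_ ?_ ?_ ?_ <;> intro k hk <;>
      rw [mem_Icc] at hk
    · exact mem_Icc.mpr (by lia)
    · exact mem_Icc.mpr (by lia)
    · lia
    · lia
    · rw [Nat.cast_sub (by lia)]
  rw [sum_add_distrib, reflect, harmonic_eq_sum_Icc, two_mul]
  push_cast
  rfl

lemma harmonic_le_pi_div_two_mul_log (n : ℕ) : (harmonic n : ℝ) ≤ π / 2 * log (n + 1 : ℕ) := by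
  induction n with
  | zero => simp
  | succ n ih =>
    have increment : ((n + 1 : ℕ) : ℝ)⁻¹ ≤ π / 2 * log (1 + ((n + 1 : ℕ) : ℝ)⁻¹) := by
      have hn : (1 : ℝ) ≤ (n + 1 : ℕ) := by exact_mod_cast n.succ_pos
      generalize ((n + 1 : ℕ) : ℝ) = x at hn
      calc x⁻¹ ≤ 3 / 2 * (2 * x⁻¹ / (x⁻¹ + 2)) := by
            field_simp
            linarith
        _ ≤ π / 2 * log (1 + x⁻¹) := by
            gcongr
            · exact pi_gt_three.le
            · exact le_log_one_add_of_nonneg (by positivity)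
    calc (harmonic (n + 1) : ℝ) = harmonic n + ((n + 1 : ℕ) : ℝ)⁻¹ := by
          rw [harmonic_succ]
          push_cast
          rfl
      _ ≤ π / 2 * log (n + 1 : ℕ) + π / 2 * log (1 + ((n + 1 : ℕ) : ℝ)⁻¹) :=
          add_le_add ih increment
      _ = π / 2 * log (n + 1 + 1 : ℕ) := by
          rw [← mul_add, ← log_mul (by positivity) (by positivity), mul_one_add,
            mul_inv_cancel₀ (by positivity)]
          push_cast
          rfl

lemma sum_Icc_abs_dirichlet_natCast_add_le (n : ℕ) {ν : ℝ} (hν : |ν| ≤ 1 / 2) :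
    ∑ k ∈ Icc 1 n, |dirichlet (n + 1) (k + ν)| ≤ π ^ 2 * |ν| * log (n + 1 : ℕ) :=
  calc ∑ k ∈ Icc 1 n, |dirichlet (n + 1) (k + ν)|
      ≤ ∑ k ∈ Icc 1 n, π * |ν| * ((k : ℝ)⁻¹ + ((n + 1 : ℕ) - k : ℝ)⁻¹) := by
        refine sum_le_sum fun k hk ↦ ?_
        rw [mem_Icc] at hk
        exact abs_dirichlet_natCast_add_le hk.1 (by lia) hν
    _ = π * |ν| * (2 * harmonic n) := by rw [← mul_sum, sum_Icc_one_inv_add_inv_sub]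
    _ ≤ π * |ν| * (2 * (π / 2 * log (n + 1 : ℕ))) := by
        gcongr
        exact harmonic_le_pi_div_two_mul_log n
    _ = π ^ 2 * |ν| * log (n + 1 : ℕ) := by ring

lemma sum_range_succ_abs_mul_le {R : Type*} [Ring R] [LinearOrder R] [IsStrictOrderedRing R]
    {f : ℕ → R} (hf : ∀ k, |f k| ≤ 1) (g : ℕ → R) (n : ℕ) :
    ∑ k ∈ range (n + 1), |f k * g k| ≤ |f 0 * g 0| + ∑ k ∈ Icc 1 n, |g k| := by
  rw [range_eq_Ico, sum_eq_sum_Ico_succ_bot (Nat.add_one_pos n), zero_add, Ico_add_one_right_eq_Icc]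
  refine add_le_add le_rfl (sum_le_sum fun k _ ↦ ?_)
  rw [abs_mul]
  exact mul_le_of_le_one_left (abs_nonneg _) (hf k)

theorem dirichlet_tail_bound_general (N : ℕ) (hN : N ≠ 0) (ν : ℝ) (hν : |ν| ≤ 1 / 2) :
    (∑ k ∈ Icc 1 (N - 1), |dirichlet N (k + ν)| ≤ π ^ 2 * |ν| * log N) ∧
    (∑ k ∈ range N, |sVec N ν k| ≤ |sVec N ν 0| + π ^ 2 * |ν| * log N) ∧
    (∑ k ∈ range N, |cVec N ν k| ≤ |cVec N ν 0| + π ^ 2 * |ν| * log N) := by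
  obtain ⟨n, rfl⟩ := Nat.exists_eq_succ_of_ne_zero hN
  have tail := sum_Icc_abs_dirichlet_natCast_add_le n hν
  exact ⟨tail,
    (sum_range_succ_abs_mul_le (fun _ ↦ abs_sin_le_one _) _ n).trans (add_le_add le_rfl tail),
    (sum_range_succ_abs_mul_le (fun _ ↦ abs_cos_le_one _) _ n).trans (add_le_add le_rfl tail)⟩

/-- For `N ≥ 100` and `0 < |ν| ≤ 1/2`, the Dirichlet-kernel tail satisfies
`∑_{k=1}^{N-1} |D_N(k+ν)| ≤ π²|ν| ln N`, and consequently
`‖s_ν‖₁ ≤ |s_{ν,0}| + π²|ν| ln N` and `‖c_ν‖₁ ≤ |c_{ν,0}| + π²|ν| ln N`. -/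
theorem dirichlet_tail_bound (N : ℕ) (hN : 100 ≤ N) (ν : ℝ)
    (hν0 : 0 < |ν|) (hν : |ν| ≤ 1 / 2) :
    (∑ k ∈ Finset.Icc 1 (N - 1), |dirichlet N ((k : ℝ) + ν)|
        ≤ Real.pi ^ 2 * |ν| * Real.log N) ∧
    (∑ k ∈ Finset.range N, |sVec N ν k| ≤ |sVec N ν 0| + Real.pi ^ 2 * |ν| * Real.log N) ∧
    (∑ k ∈ Finset.range N, |cVec N ν k| ≤ |cVec N ν 0| + Real.pi ^ 2 * |ν| * Real.log N) :=
  dirichlet_tail_bound_general N (by lia) ν hν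
end

section
/- For every positive integer N and every real ν, Σ_{k=0}^{N−1} sin²(π_N(k + ν))·D_N(k + ν)² = (1 − 1/N)·sin²(πν); equivalently, ‖s_ν‖₂² = (1 − 1/N)·sin²(πν). -/
/-!
With `t_k = π(k+ν)/N` and `K_n(t) = ∑_{m<n} cos((2m+1-n)t) = sin(nt)/sin(t)`, one has
`D_N(k+ν) = K_N(t_k)/N`. The quotient formula gives the exchange rule
`sin(Mt) K_N(t) = sin(Nt) K_M(t)`, and `sin²(N t_k) = sin²(πν)` for all `k`, so for `M ≤ N`
everything reduces to `∑_{k<N} K_M(t_k)² = N M`. Up to a unimodular factor, `K_M(t_k)` is the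
discrete Fourier transform at `k` of the `M` unimodular coefficients `exp(2πimν/N)`, and this last
identity is Parseval's. The theorem is the case `M = N - 1`.
-/

theorem geom_sum_eq_zero_of_pow_eq_one {R : Type*} [Ring R] [NoZeroDivisors R] {x : R} {n : ℕ}
    (hx : x ≠ 1) (hxn : x ^ n = 1) : ∑ k ∈ Finset.range n, x ^ k = 0 := by
  have h : (∑ k ∈ Finset.range n, x ^ k) * (x - 1) = 0 := by
    rw [geom_sum_mul, hxn, sub_self]
  exact (mul_eq_zero.1 h).resolve_right (sub_ne_zero.2 hx)

section Parseval

open scoped ComplexConjugate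

variable {N : ℕ}

theorem sum_primitiveRoot_pow_div_pow {K : Type*} [Field K] {ζ : K} (hζ : IsPrimitiveRoot ζ N)
    {m n : ℕ} (hm : m < N) (hn : n < N) :
    ∑ k ∈ Finset.range N, (ζ ^ m / ζ ^ n) ^ k = if m = n then (N : K) else 0 := by
  have hζn : ζ ^ n ≠ 0 := pow_ne_zero n (hζ.ne_zero (Nat.ne_zero_of_lt hm))
  split_ifs with hmn
  · simp [hmn, div_self hζn]
  · apply geom_sum_eq_zero_of_pow_eq_one
    · rw [Ne, div_eq_one_iff_eq hζn]
      exact fun h ↦ hmn (hζ.pow_inj hm hn h)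
    · rw [div_pow, pow_right_comm, pow_right_comm ζ n, hζ.pow_eq_one, one_pow, one_pow, div_one]

theorem sum_norm_sq_sum_mul_primitiveRoot_pow {ζ : ℂ} (hζ : IsPrimitiveRoot ζ N) {s : Finset ℕ}
    (hs : s ⊆ Finset.range N) (a : ℕ → ℂ) :
    ∑ k ∈ Finset.range N, ‖∑ m ∈ s, a m * (ζ ^ m) ^ k‖ ^ 2 = N * ∑ m ∈ s, ‖a m‖ ^ 2 := by
  have hlt {m : ℕ} (hm : m ∈ s) : m < N := Finset.mem_range.1 (hs hm)
  have hconj (n : ℕ) (hn : n ∈ s) : conj (ζ ^ n) = (ζ ^ n)⁻¹ := by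
    have hnorm : ‖ζ ^ n‖ = 1 := by
      rw [norm_pow, hζ.norm'_eq_one (Nat.ne_zero_of_lt (hlt hn)), one_pow]
    rw [Complex.inv_eq_conj hnorm]
  rw [← Complex.ofReal_inj]
  push_cast
  simp only [← Complex.mul_conj', map_sum, map_mul, Finset.sum_mul_sum]
  calc ∑ k ∈ Finset.range N, ∑ m ∈ s, ∑ n ∈ s,
        a m * (ζ ^ m) ^ k * (conj (a n) * conj ((ζ ^ n) ^ k))
      = ∑ m ∈ s, ∑ n ∈ s, a m * conj (a n) * ∑ k ∈ Finset.range N, (ζ ^ m / ζ ^ n) ^ k := by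
        rw [Finset.sum_comm]
        refine Finset.sum_congr rfl fun m _ ↦ ?_
        rw [Finset.sum_comm]
        refine Finset.sum_congr rfl fun n hn ↦ ?_
        rw [Finset.mul_sum]
        refine Finset.sum_congr rfl fun k _ ↦ ?_
        rw [map_pow, hconj n hn, div_pow, inv_pow]
        ring
    _ = ∑ m ∈ s, ∑ n ∈ s, a m * conj (a n) * if m = n then (N : ℂ) else 0 :=
        Finset.sum_congr rfl fun m hm ↦ Finset.sum_congr rfl fun n hn ↦ by
          rw [sum_primitiveRoot_pow_div_pow hζ (hlt hm) (hlt hn)]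
    _ = N * ∑ m ∈ s, a m * conj (a m) := by
        rw [Finset.mul_sum]
        refine Finset.sum_congr rfl fun m hm ↦ ?_
        simp [hm, mul_comm]

end Parseval

/-- The unnormalized Dirichlet kernel `sin(nt)/sin(t)`, encoded as a cosine sum to give it
its limiting value `± n` at the zeros of `sin t`. It serves to compare kernels of different orders
at the same angle. -/
noncomputable def dirichletSum (n : ℕ) (t : ℝ) : ℝ :=
  ∑ m ∈ Finset.range n, Real.cos ((2 * m + 1 - n) * t)

theorem dirichlet_eq_dirichletSum_div (N : ℕ) (ν : ℝ) :
    dirichlet N ν = dirichletSum N (Real.pi * ν / N) / N := by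
  rw [dirichlet, dirichletSum, one_div_mul_eq_div]
  congr! 3
  ring

theorem sin_mul_dirichletSum (n : ℕ) (t : ℝ) :
    Real.sin t * dirichletSum n t = Real.sin (n * t) := by
  have h := Real.sin_mul_sum_cos n (2 * t) ((1 - n) * t)
  have hmid : ((n : ℝ) - 1) * (2 * t) / 2 + (1 - n) * t = 0 := by ring
  rw [hmid, Real.cos_zero, mul_one, mul_div_cancel_left₀ t two_ne_zero,
    mul_left_comm, mul_div_cancel_left₀ (n * t) two_ne_zero] at h
  rw [← h, dirichletSum]
  congr! 3
  ring

theorem sin_mul_dirichletSum_comm (m n : ℕ) (t : ℝ) :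
    Real.sin (m * t) * dirichletSum n t = Real.sin (n * t) * dirichletSum m t := by
  rw [← sin_mul_dirichletSum, ← sin_mul_dirichletSum]
  ring

theorem sum_sin_centered_eq_zero (n : ℕ) (t : ℝ) :
    ∑ m ∈ Finset.range n, Real.sin ((2 * m + 1 - n) * t) = 0 := by
  rw [← self_eq_neg, ← Finset.sum_neg_distrib, ← Finset.sum_range_reflect]
  refine Finset.sum_congr rfl fun m hm ↦ ?_
  have hreflect : ((n - 1 - m : ℕ) : ℝ) + m + 1 = n := by
    exact_mod_cast (by have := Finset.mem_range.1 hm; omega : n - 1 - m + m + 1 = n)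
  rw [← Real.sin_neg]
  congr 1
  linear_combination 2 * t * hreflect

theorem ofReal_dirichletSum (n : ℕ) (t : ℝ) :
    (dirichletSum n t : ℂ) =
      ∑ m ∈ Finset.range n, Complex.exp (((2 * m + 1 - n) * t : ℝ) * Complex.I) := by
  apply Complex.ext
  · simp only [dirichletSum, Complex.ofReal_re, Complex.re_sum, Complex.exp_ofReal_mul_I_re]
  · simp only [Complex.ofReal_im, Complex.im_sum, Complex.exp_ofReal_mul_I_im,
      sum_sin_centered_eq_zero]

theorem norm_sum_exp_sq_eq_dirichletSum_sq (n : ℕ) (t : ℝ) :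
    ‖∑ m ∈ Finset.range n, Complex.exp ((2 * m * t : ℝ) * Complex.I)‖ ^ 2 =
      dirichletSum n t ^ 2 := by
  have h : (dirichletSum n t : ℂ) = Complex.exp (((1 - n) * t : ℝ) * Complex.I) *
      ∑ m ∈ Finset.range n, Complex.exp ((2 * m * t : ℝ) * Complex.I) := by
    rw [ofReal_dirichletSum, Finset.mul_sum]
    refine Finset.sum_congr rfl fun m _ ↦ ?_
    rw [← Complex.exp_add]
    push_cast
    ring_nf
  rw [← sq_abs (dirichletSum n t), ← Real.norm_eq_abs, ← Complex.norm_real, h, norm_mul,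
    Complex.norm_exp_ofReal_mul_I, one_mul]

theorem sum_dirichletSum_sq {M N : ℕ} (hN : 0 < N) (hMN : M ≤ N) (ν : ℝ) :
    ∑ k ∈ Finset.range N, dirichletSum M (Real.pi * (k + ν) / N) ^ 2 = N * M := by
  let ζ : ℂ := Complex.exp (2 * Real.pi * Complex.I / N)
  let a (m : ℕ) : ℂ := Complex.exp ((2 * m * (Real.pi * ν / N) : ℝ) * Complex.I)
  have hζ : IsPrimitiveRoot ζ N := Complex.isPrimitiveRoot_exp N hN.ne'
  have hexp (k m : ℕ) :
      Complex.exp ((2 * m * (Real.pi * (k + ν) / N) : ℝ) * Complex.I) = a m * (ζ ^ m) ^ k := by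
    simp only [a, ζ, ← Complex.exp_nat_mul, ← Complex.exp_add]
    push_cast
    ring_nf
  have hparseval := sum_norm_sq_sum_mul_primitiveRoot_pow hζ (Finset.range_subset_range.2 hMN) a
  simpa only [← norm_sum_exp_sq_eq_dirichletSum_sq, hexp, a, Complex.norm_exp_ofReal_mul_I,
    one_pow, Finset.sum_const, Finset.card_range, nsmul_eq_mul, mul_one] using hparseval

theorem sin_sq_add_nat_mul_pi (x : ℝ) (k : ℕ) :
    Real.sin (x + k * Real.pi) ^ 2 = Real.sin x ^ 2 := by
  rw [Real.sin_add_nat_mul_pi, mul_pow, pow_right_comm, neg_one_sq, one_pow, one_mul]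

theorem sVec_norm_sq_general {M N : ℕ} (hN : 0 < N) (hMN : M ≤ N) (ν : ℝ) :
    ∑ k ∈ Finset.range N,
      Real.sin (Real.pi * (M / N) * (k + ν)) ^ 2 * dirichlet N (k + ν) ^ 2 =
        M / N * Real.sin (Real.pi * ν) ^ 2 := by
  have hN0 : (N : ℝ) ≠ 0 := by positivity
  have hterm (k : ℕ) :
      Real.sin (Real.pi * (M / N) * (k + ν)) ^ 2 * dirichlet N (k + ν) ^ 2 =
        (Real.sin (Real.pi * ν) / N) ^ 2 * dirichletSum M (Real.pi * (k + ν) / N) ^ 2 := by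
    set t : ℝ := Real.pi * (k + ν) / N with ht
    have hMt : Real.pi * (M / N) * (k + ν) = M * t := by ring
    have hNt : N * t = Real.pi * ν + k * Real.pi := by rw [ht]; field_simp; ring
    calc Real.sin (Real.pi * (M / N) * (k + ν)) ^ 2 * dirichlet N (k + ν) ^ 2
        = (Real.sin (M * t) * dirichletSum N t) ^ 2 / N ^ 2 := by
          rw [hMt, dirichlet_eq_dirichletSum_div]
          ring
      _ = Real.sin (N * t) ^ 2 * dirichletSum M t ^ 2 / N ^ 2 := by
          rw [sin_mul_dirichletSum_comm, mul_pow]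
      _ = (Real.sin (Real.pi * ν) / N) ^ 2 * dirichletSum M t ^ 2 := by
          rw [hNt, sin_sq_add_nat_mul_pi]
          ring
  simp only [hterm]
  rw [← Finset.mul_sum, sum_dirichletSum_sq hN hMN]
  field_simp

/-- For every positive integer `N` and real `ν`,
`∑_{k=0}^{N-1} sin²(π_N(k+ν)) D_N(k+ν)² = (1 - 1/N) sin²(πν)`, i.e.
`‖s_ν‖₂² = (1 - 1/N) sin²(πν)` where `π_N = π(1-1/N)`. -/
theorem sVec_norm_sq (N : ℕ) (hN : 0 < N) (ν : ℝ) :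
    ∑ k ∈ Finset.range N,
      (Real.sin (Real.pi * (1 - 1 / (N : ℝ)) * ((k : ℝ) + ν)))^2 *
        (dirichlet N ((k : ℝ) + ν))^2
      = (1 - 1 / (N : ℝ)) * (Real.sin (Real.pi * ν))^2 := by
  have hM : ((N - 1 : ℕ) : ℝ) / N = 1 - 1 / N := by
    rw [Nat.cast_pred hN, sub_div, div_self (by positivity)]
  simpa only [hM] using sVec_norm_sq_general hN (Nat.sub_le N 1) ν
end

section
/- For every positive integer N and every real ν, Σ_{k=0}^{N−1} sin²(π(k + ν)/N)·D_N(k + ν)² = sin²(πν)/N. -/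
/-!
Multiplying the closed form of the Dirichlet kernel by its denominator gives
`sin(πx/N) D_N(x) = sin(πx)/N`, with no case distinction at the zeros of `sin(πx/N)`. At
`x = k + ν` the square of the right-hand side does not depend on `k`, as `sin²` has period `π`, so
the sum consists of `N` terms equal to `sin²(πν)/N²`.
-/

theorem sin_mul_dirichlet {N : ℕ} (hN : N ≠ 0) (x : ℝ) :
    Real.sin (Real.pi * x / N) * dirichlet N x = Real.sin (Real.pi * x) / N := by
  have hN' : (N : ℝ) ≠ 0 := Nat.cast_ne_zero.mpr hN
  set a : ℝ := 2 * (Real.pi * x / N) with ha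
  set b : ℝ := Real.pi * x * (1 - N) / N with hb
  have angle (m : ℕ) : Real.pi * x * (2 * m + 1 - N) / N = a * m + b := by
    rw [ha, hb]
    ring
  have half_step : Real.pi * x / N = a / 2 := by rw [ha, mul_div_cancel_left₀ _ two_ne_zero]
  have half_span : N * a / 2 = Real.pi * x := by
    rw [ha]
    field_simp
  have mean_angle : (N - 1) * a / 2 + b = 0 := by
    rw [ha, hb]
    ring
  calc Real.sin (Real.pi * x / N) * dirichlet N x
      = Real.sin (a / 2) * (∑ m ∈ Finset.range N, Real.cos (a * m + b)) / N := by
        simp only [dirichlet, angle, half_step]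
        ring
    _ = Real.sin (N * a / 2) * Real.cos ((N - 1) * a / 2 + b) / N := by
        rw [Real.sin_mul_sum_cos]
    _ = Real.sin (Real.pi * x) / N := by
        rw [half_span, mean_angle, Real.cos_zero, mul_one]

/-- For every positive integer `N` and real `ν`,
`∑_{k=0}^{N-1} sin²(π(k+ν)/N) D_N(k+ν)² = sin²(πν)/N`. -/
theorem sin_sq_dirichlet_sum (N : ℕ) (hN : 0 < N) (ν : ℝ) :
    ∑ k ∈ Finset.range N,
      (Real.sin (Real.pi * ((k : ℝ) + ν) / (N : ℝ)))^2 * (dirichlet N ((k : ℝ) + ν))^2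
      = (Real.sin (Real.pi * ν))^2 / (N : ℝ) := by
  have term_eq (k : ℕ) :
      Real.sin (Real.pi * (k + ν) / N) ^ 2 * dirichlet N (k + ν) ^ 2
        = Real.sin (Real.pi * ν) ^ 2 / N ^ 2 := by
    have shift : Real.pi * (k + ν) = Real.pi * ν + k * Real.pi := by ring
    rw [← mul_pow, sin_mul_dirichlet hN.ne', div_pow, shift, sin_sq_add_nat_mul_pi]
  simp only [term_eq, Finset.sum_const, Finset.card_range, nsmul_eq_mul]
  field_simp
end

section
/- For every positive integer N and every real ν with |ν| ≤ 1/2, one has ‖s_ν‖₂ ≤ (2π/√3)·|ν| and ‖c_ν − e₀‖₂ ≤ (2π/√3)·|ν|, where e₀ ∈ ℝ^N is the standard basis vector with a 1 in entry k = 0. -/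
/-!
Multiplying the cosine sum `D_N(x)` by the phase `e^{iπ_N x}` shifts its symmetric frequencies
to `0, …, N - 1`. Hence `c_ν + i s_ν` is the inverse discrete Fourier transform of the samples
`e^{2πiνm/N}`, and `e₀` is that of the constant `1`. By Parseval,
`‖c_ν - e₀‖² + ‖s_ν‖² = N⁻¹ ∑ |e^{2πiνm/N} - 1|² ≤ N⁻¹ ∑ (2πνm/N)² ≤ (2πν)² / 3`.
-/

section DiscreteFourier

open Finset ComplexConjugate

variable {𝕜 : Type*} [RCLike 𝕜] {ζ : 𝕜} {N : ℕ}

lemma sum_pow_mul_mul_conj_pow_mul (hζ : IsPrimitiveRoot ζ N) {m n : ℕ} (hm : m < N)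
    (hn : n < N) :
    ∑ k ∈ range N, ζ ^ (m * k) * conj (ζ ^ (n * k)) = if m = n then (N : 𝕜) else 0 := by
  have hN : N ≠ 0 := by lia
  have hζ_conj : conj ζ = ζ⁻¹ :=
    (RCLike.inv_eq_conj (hζ.isOfFinOrder hN).norm_eq_one).symm
  have hterm (k : ℕ) : ζ ^ (m * k) * conj (ζ ^ (n * k)) = (ζ ^ m / ζ ^ n) ^ k := by
    rw [map_pow, hζ_conj, inv_pow, ← div_eq_mul_inv, pow_mul, pow_mul, div_pow]
  simp only [hterm]
  split_ifs with hmn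
  · simp [hmn, hζ.ne_zero hN]
  · have hratio_ne_one : ζ ^ m / ζ ^ n ≠ 1 := fun h =>
      hmn (hζ.pow_inj hm hn ((div_eq_one_iff_eq (pow_ne_zero n (hζ.ne_zero hN))).1 h))
    have hratio_pow : (ζ ^ m / ζ ^ n) ^ N = 1 := by
      rw [div_pow, pow_right_comm ζ m, pow_right_comm ζ n, hζ.pow_eq_one, one_pow, one_pow, div_one]
    rw [geom_sum_eq hratio_ne_one, hratio_pow, sub_self, zero_div]

lemma sum_pow_mul_eq_ite (hζ : IsPrimitiveRoot ζ N) {k : ℕ} (hk : k < N) :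
    ∑ m ∈ range N, ζ ^ (m * k) = if k = 0 then (N : 𝕜) else 0 := by
  simpa [mul_comm] using sum_pow_mul_mul_conj_pow_mul hζ hk (Nat.zero_lt_of_lt hk)

lemma sum_norm_sq_sum_pow_mul (hζ : IsPrimitiveRoot ζ N) (a : ℕ → 𝕜) :
    ∑ k ∈ range N, ‖∑ m ∈ range N, ζ ^ (m * k) * a m‖ ^ 2 = N * ∑ m ∈ range N, ‖a m‖ ^ 2 := by
  apply RCLike.ofReal_injective (K := 𝕜)
  push_cast
  simp only [← RCLike.mul_conj]
  calc ∑ k ∈ range N,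
        (∑ m ∈ range N, ζ ^ (m * k) * a m) * conj (∑ n ∈ range N, ζ ^ (n * k) * a n)
      = ∑ k ∈ range N, ∑ m ∈ range N, ∑ n ∈ range N,
          ζ ^ (m * k) * conj (ζ ^ (n * k)) * (a m * conj (a n)) := by
        simp only [map_sum, map_mul, sum_mul_sum, mul_mul_mul_comm]
    _ = ∑ m ∈ range N, ∑ n ∈ range N,
          (∑ k ∈ range N, ζ ^ (m * k) * conj (ζ ^ (n * k))) * (a m * conj (a n)) := by
        rw [sum_comm]
        refine sum_congr rfl fun m _ => ?_
        rw [sum_comm]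
        simp only [sum_mul]
    _ = ∑ m ∈ range N, ∑ n ∈ range N, (if m = n then (N : 𝕜) else 0) * (a m * conj (a n)) :=
        sum_congr rfl fun m hm => sum_congr rfl fun n hn => by
          rw [sum_pow_mul_mul_conj_pow_mul hζ (mem_range.1 hm) (mem_range.1 hn)]
    _ = N * ∑ m ∈ range N, a m * conj (a m) := by
        rw [mul_sum]
        refine sum_congr rfl fun m hm => ?_
        simp only [ite_mul, zero_mul, sum_ite_eq, if_pos hm]

end DiscreteFourier

lemma sum_range_sq_le (N : ℕ) : ∑ m ∈ Finset.range N, (m : ℝ) ^ 2 ≤ (N : ℝ) ^ 3 / 3 := by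
  induction N with
  | zero => simp
  | succ n ih =>
    rw [Finset.sum_range_succ]
    push_cast
    linarith [n.cast_nonneg (α := ℝ)]

section DirichletVectors

open Finset Complex

lemma sum_norm_sq_exp_sub_one_le (θ : ℝ) (N : ℕ) :
    ∑ m ∈ range N, ‖exp (I * ↑(θ * m)) - 1‖ ^ 2 ≤ θ ^ 2 * ((N : ℝ) ^ 3 / 3) := by
  calc ∑ m ∈ range N, ‖exp (I * ↑(θ * m)) - 1‖ ^ 2
      ≤ ∑ m ∈ range N, ‖θ * m‖ ^ 2 := by
        gcongr
        exact Real.norm_exp_I_mul_ofReal_sub_one_le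
    _ = θ ^ 2 * ∑ m ∈ range N, (m : ℝ) ^ 2 := by
        simp only [Real.norm_eq_abs, sq_abs, mul_pow, mul_sum]
    _ ≤ θ ^ 2 * ((N : ℝ) ^ 3 / 3) := by
        gcongr
        exact sum_range_sq_le N

lemma ofReal_dirichlet (N : ℕ) (x : ℝ) :
    (dirichlet N x : ℂ) =
      1 / N * ∑ m ∈ range N, exp (Real.pi * x * (2 * m + 1 - N) / N * I) := by
  -- The frequencies `2m + 1 - N` are symmetric about `0`, so the two exponentials in each
  -- cosine have the same sum.
  have hreflect : ∑ m ∈ range N, exp (-(Real.pi * x * (2 * m + 1 - N) / N) * I) =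
      ∑ m ∈ range N, exp (Real.pi * x * (2 * m + 1 - N) / N * I) := by
    rw [← sum_range_reflect]
    refine sum_congr rfl fun m hm => ?_
    have hcast : ((N - 1 - m : ℕ) : ℂ) = N - 1 - m := by
      have := mem_range.1 hm
      rw [Nat.sub_sub, Nat.cast_sub (by lia)]
      push_cast
      ring
    rw [hcast]
    ring_nf
  simp only [dirichlet]
  push_cast
  simp only [Complex.cos]
  rw [← sum_div, sum_add_distrib, hreflect, add_self_div_two]

variable {N : ℕ}

lemma exp_mul_dirichlet (hN : N ≠ 0) (x : ℝ) :
    exp (↑(Real.pi * (1 - 1 / (N : ℝ)) * x) * I) * dirichlet N x =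
      1 / N * ∑ m ∈ range N, exp (2 * Real.pi * m * x / N * I) := by
  rw [ofReal_dirichlet, mul_left_comm, mul_sum]
  congr 1
  refine sum_congr rfl fun m _ => ?_
  rw [← exp_add]
  congr 1
  push_cast
  field_simp
  ring

lemma cVec_add_sVec_mul_I (hN : N ≠ 0) (ν : ℝ) (k : ℕ) :
    (cVec N ν k : ℂ) + sVec N ν k * I =
      1 / N * ∑ m ∈ range N,
        exp (2 * Real.pi * I / N) ^ (m * k) * exp (I * ↑(2 * Real.pi * ν / N * m)) := by
  calc (cVec N ν k : ℂ) + sVec N ν k * I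
      = exp (↑(Real.pi * (1 - 1 / (N : ℝ)) * (k + ν)) * I) * dirichlet N (k + ν) := by
        rw [exp_mul_I, cVec, sVec]
        push_cast
        ring
    _ = 1 / N * ∑ m ∈ range N, exp (2 * Real.pi * m * ↑(k + ν) / N * I) :=
        exp_mul_dirichlet hN _
    _ = _ := by
        congr 1
        refine sum_congr rfl fun m _ => ?_
        rw [← exp_nat_mul, ← exp_add]
        congr 1
        push_cast
        ring

lemma cVec_sub_ite_add_sVec_mul_I (hN : N ≠ 0) (ν : ℝ) {k : ℕ} (hk : k < N) :
    (↑(cVec N ν k - if k = 0 then 1 else 0) : ℂ) + sVec N ν k * I =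
      1 / N * ∑ m ∈ range N,
        exp (2 * Real.pi * I / N) ^ (m * k) * (exp (I * ↑(2 * Real.pi * ν / N * m)) - 1) := by
  have hdelta : ((if k = 0 then 1 else 0 : ℝ) : ℂ) =
      1 / N * ∑ m ∈ range N, exp (2 * Real.pi * I / N) ^ (m * k) := by
    rw [sum_pow_mul_eq_ite (isPrimitiveRoot_exp N hN) hk]
    split_ifs <;> simp [hN]
  rw [ofReal_sub, sub_add_eq_add_sub, cVec_add_sVec_mul_I hN, hdelta, ← mul_sub,
    ← sum_sub_distrib]
  simp only [mul_sub_one]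

lemma sum_sq_sVec_add_sum_sq_cVec_sub_ite (hN : N ≠ 0) (ν : ℝ) :
    ∑ k ∈ range N, sVec N ν k ^ 2 + ∑ k ∈ range N, (cVec N ν k - if k = 0 then 1 else 0) ^ 2 =
      1 / N * ∑ m ∈ range N, ‖exp (I * ↑(2 * Real.pi * ν / N * m)) - 1‖ ^ 2 := by
  calc ∑ k ∈ range N, sVec N ν k ^ 2 + ∑ k ∈ range N, (cVec N ν k - if k = 0 then 1 else 0) ^ 2
      = ∑ k ∈ range N,
          ‖(↑(cVec N ν k - if k = 0 then 1 else 0) : ℂ) + sVec N ν k * I‖ ^ 2 := by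
        rw [add_comm, ← sum_add_distrib]
        simp only [← normSq_eq_norm_sq, normSq_add_mul_I]
    _ = ∑ k ∈ range N, (1 / (N : ℝ)) ^ 2 * ‖∑ m ∈ range N,
          exp (2 * Real.pi * I / N) ^ (m * k) *
            (exp (I * ↑(2 * Real.pi * ν / N * m)) - 1)‖ ^ 2 :=
        sum_congr rfl fun k hk => by
          rw [cVec_sub_ite_add_sVec_mul_I hN ν (mem_range.1 hk), norm_mul, mul_pow, norm_div,
            norm_one, Complex.norm_natCast]
    _ = 1 / N * ∑ m ∈ range N, ‖exp (I * ↑(2 * Real.pi * ν / N * m)) - 1‖ ^ 2 := by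
        rw [← mul_sum, sum_norm_sq_sum_pow_mul (isPrimitiveRoot_exp N hN)]
        field_simp

lemma sum_sq_sVec_add_sum_sq_cVec_sub_ite_le (hN : N ≠ 0) (ν : ℝ) :
    ∑ k ∈ range N, sVec N ν k ^ 2 + ∑ k ∈ range N, (cVec N ν k - if k = 0 then 1 else 0) ^ 2 ≤
      (2 * Real.pi / √3 * |ν|) ^ 2 := by
  rw [sum_sq_sVec_add_sum_sq_cVec_sub_ite hN]
  calc 1 / N * ∑ m ∈ range N, ‖exp (I * ↑(2 * Real.pi * ν / N * m)) - 1‖ ^ 2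
      ≤ 1 / N * ((2 * Real.pi * ν / N) ^ 2 * ((N : ℝ) ^ 3 / 3)) := by
        gcongr
        exact sum_norm_sq_exp_sub_one_le _ N
    _ = (2 * Real.pi / √3 * |ν|) ^ 2 := by
        rw [mul_pow, sq_abs, div_pow _ √3, Real.sq_sqrt (by norm_num)]
        field_simp

end DirichletVectors

theorem sVec_cVec_l2_bounds_general (N : ℕ) (hN : 0 < N) (ν : ℝ) :
    Real.sqrt (∑ k ∈ Finset.range N, (sVec N ν k)^2)
        ≤ 2 * Real.pi / Real.sqrt 3 * |ν| ∧
    Real.sqrt (∑ k ∈ Finset.range N, (cVec N ν k - if k = 0 then 1 else 0)^2)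
        ≤ 2 * Real.pi / Real.sqrt 3 * |ν| := by
  have hsum := sum_sq_sVec_add_sum_sq_cVec_sub_ite_le hN.ne' ν
  have hbound : 0 ≤ 2 * Real.pi / √3 * |ν| := by positivity
  constructor <;> refine Real.sqrt_le_iff.2 ⟨hbound, le_trans ?_ hsum⟩
  · exact le_add_of_nonneg_right (Finset.sum_nonneg fun _ _ => sq_nonneg _)
  · exact le_add_of_nonneg_left (Finset.sum_nonneg fun _ _ => sq_nonneg _)

/-- For every positive integer `N` and `|ν| ≤ 1/2`, `‖s_ν‖₂ ≤ (2π/√3)|ν|` and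
`‖c_ν − e₀‖₂ ≤ (2π/√3)|ν|`, where `e₀` is the standard basis vector at entry `0`. -/
theorem sVec_cVec_l2_bounds (N : ℕ) (hN : 0 < N) (ν : ℝ) (hν : |ν| ≤ 1 / 2) :
    Real.sqrt (∑ k ∈ Finset.range N, (sVec N ν k)^2)
        ≤ 2 * Real.pi / Real.sqrt 3 * |ν| ∧
    Real.sqrt (∑ k ∈ Finset.range N, (cVec N ν k - if k = 0 then 1 else 0)^2)
        ≤ 2 * Real.pi / Real.sqrt 3 * |ν| :=
  sVec_cVec_l2_bounds_general N hN ν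
end

section
/- Let N be a positive integer, x ∈ ℝ^N, and ν ∈ ℝ with |ν| ≤ 1/2. Write F_ν^{−1}(F x) = x^R + i·x^I with x^R, x^I ∈ ℝ^N. Then ‖x^I‖₂ ≤ (2π/√3)·|ν|·‖x‖₁ and ‖x^R − x‖₂ ≤ (2π/√3)·|ν|·‖x‖₁. -/
open Matrix

/-- The shifted Fourier matrix `(F_ν)_{t,k} = exp(−2πi t (k+ν)/N)`; `F = Fmat N 0` is the
discrete Fourier matrix. -/
noncomputable def Fmat (N : ℕ) (ν : ℝ) : Matrix (Fin N) (Fin N) ℂ :=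
  Matrix.of fun t k =>
    Complex.exp (((-(2 * Real.pi * ((t : ℕ) : ℝ) * (((k : ℕ) : ℝ) + ν) / (N : ℝ))) : ℝ)
      * Complex.I)

/-- `F_ν^{-1} (F x)` where `F_ν^{-1} = (1/N) F_ν^*`. -/
noncomputable def gridTransform (N : ℕ) (ν : ℝ) (x : Fin N → ℝ) : Fin N → ℂ :=
  (((N : ℂ))⁻¹ • (Fmat N ν)ᴴ) *ᵥ ((Fmat N 0) *ᵥ fun k => ((x k : ℝ) : ℂ))

/-!
Since `F_ν⁻¹ = N⁻¹ F_ν*`, the matrix `F_ν` scales Euclidean norms by `√N`, so the error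
`F_ν⁻¹ F_μ z - z` has the norm of `N ^ (-1/2) (F_μ - F_ν) z`. Row `t` of `F_μ - F_ν` has entries of
modulus at most `2πt|μ - ν| / N`, because a chord of the unit circle is at most as long as its arc,
and `∑ t < N, t² ≤ N³ / 3` yields the constant `2π / √3`. For `μ = 0` and real `z`, the real and
imaginary parts of the error are then bounded by its modulus.
-/

open Finset WithLp

theorem succ_mul_sum_range_pow_le (p n : ℕ) :
    (p + 1) * ∑ t ∈ range n, t ^ p ≤ n ^ (p + 1) := by
  induction n with
  | zero => simp
  | succ n ih =>
    calc (p + 1) * ∑ t ∈ range (n + 1), t ^ p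
        = (p + 1) * ∑ t ∈ range n, t ^ p + (p + 1) * n ^ p := by rw [sum_range_succ, mul_add]
      _ ≤ n ^ (p + 1) + (p + 1) * n ^ p := by gcongr
      _ ≤ (n + 1) ^ (p + 1) := by
        simpa using pow_add_mul_le_add_pow (a := n) (b := 1) n.zero_le (by positivity) (p + 1)

theorem norm_exp_mul_I_sub_exp_mul_I_le (a b : ℝ) :
    ‖Complex.exp (a * Complex.I) - Complex.exp (b * Complex.I)‖ ≤ |a - b| := by
  have factor : Complex.exp (a * Complex.I) - Complex.exp (b * Complex.I) =
      Complex.exp (b * Complex.I) * (Complex.exp (Complex.I * (a - b : ℝ)) - 1) := by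
    rw [mul_sub, ← Complex.exp_add, mul_one]
    congr 2
    push_cast
    ring
  rw [factor, norm_mul, Complex.norm_exp_ofReal_mul_I, one_mul]
  exact Real.norm_exp_I_mul_ofReal_sub_one_le

theorem geom_sum_zpow_eq_zero_of_isPrimitiveRoot {K : Type*} [Field K] {ζ : K} {n : ℕ}
    (hζ : IsPrimitiveRoot ζ n) {l : ℤ} (hl : ¬ (n : ℤ) ∣ l) :
    ∑ t ∈ range n, (ζ ^ l) ^ t = 0 := by
  have ne_one : ζ ^ l ≠ 1 := mt (hζ.zpow_eq_one_iff_dvd l).1 hl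
  have pow_eq_one : (ζ ^ l) ^ n = 1 := by
    rw [← zpow_natCast, zpow_comm, zpow_natCast, hζ.pow_eq_one, _root_.one_zpow]
  rw [geom_sum_eq ne_one, pow_eq_one, sub_self, zero_div]

theorem star_dotProduct_self_eq_norm_toLp_sq {𝕜 n : Type*} [RCLike 𝕜] [Fintype n] (v : n → 𝕜) :
    star v ⬝ᵥ v = (‖toLp 2 v‖ : 𝕜) ^ 2 := by
  rw [dotProduct_comm, ← EuclideanSpace.inner_toLp_toLp, inner_self_eq_norm_sq_to_K]

theorem norm_toLp_mulVec_sq_of_conjTranspose_mul_self {𝕜 m n : Type*} [RCLike 𝕜] [Fintype m]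
    [Fintype n] [DecidableEq n] {A : Matrix m n 𝕜} {c : ℝ} (hA : Aᴴ * A = (c : 𝕜) • 1)
    (v : n → 𝕜) :
    ‖toLp 2 (A *ᵥ v)‖ ^ 2 = c * ‖toLp 2 v‖ ^ 2 := by
  have dot_mulVec : star (A *ᵥ v) ⬝ᵥ (A *ᵥ v) = c * (star v ⬝ᵥ v) := by
    rw [star_mulVec, dotProduct_mulVec, vecMul_vecMul, hA, ← dotProduct_mulVec, smul_mulVec,
      one_mulVec, dotProduct_smul, smul_eq_mul]
  simp only [star_dotProduct_self_eq_norm_toLp_sq] at dot_mulVec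
  exact_mod_cast dot_mulVec

theorem norm_toLp_mulVec_sq_le_of_norm_row_le {R m n : Type*} [NonUnitalSeminormedRing R]
    [Fintype m] [Fintype n] {A : Matrix m n R} {r : m → ℝ} (hA : ∀ i j, ‖A i j‖ ≤ r i)
    (v : n → R) :
    ‖toLp 2 (A *ᵥ v)‖ ^ 2 ≤ (∑ i, r i ^ 2) * ‖toLp 1 v‖ ^ 2 := by
  have entry_le (i : m) : ‖(A *ᵥ v) i‖ ≤ r i * ‖toLp 1 v‖ := by
    calc ‖∑ j, A i j * v j‖ ≤ ∑ j, ‖A i j * v j‖ := norm_sum_le _ _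
      _ ≤ ∑ j, r i * ‖v j‖ := by
        gcongr with j
        grw [norm_mul_le, hA]
      _ = r i * ‖toLp 1 v‖ := by rw [← mul_sum, PiLp.norm_eq_of_L1]
  rw [PiLp.norm_sq_eq_of_L2, sum_mul]
  simp_rw [← mul_pow]
  gcongr with i
  exact entry_le i

theorem sqrt_sum_im_sq_le_norm_toLp {n : Type*} [Fintype n] (v : n → ℂ) :
    √(∑ i, (v i).im ^ 2) ≤ ‖toLp 2 v‖ := by
  rw [EuclideanSpace.norm_eq]
  gcongr √(∑ i, ?_) with i
  exact sq_le_sq.2 (by simpa using Complex.abs_im_le_norm (v i))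

theorem sqrt_sum_re_sq_le_norm_toLp {n : Type*} [Fintype n] (v : n → ℂ) :
    √(∑ i, (v i).re ^ 2) ≤ ‖toLp 2 v‖ := by
  rw [EuclideanSpace.norm_eq]
  gcongr √(∑ i, ?_) with i
  exact sq_le_sq.2 (by simpa using Complex.abs_re_le_norm (v i))

section Fourier

variable {N : ℕ}

theorem star_Fmat_mul_Fmat_apply (ν : ℝ) (t j k : Fin N) :
    star (Fmat N ν t j) * Fmat N ν t k =
      (Complex.exp (2 * Real.pi * Complex.I / N) ^ ((j : ℤ) - k)) ^ (t : ℕ) := by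
  simp only [Fmat, of_apply, Complex.star_def, ← Complex.exp_conj, ← Complex.exp_add,
    ← Complex.exp_nat_mul, ← Complex.exp_int_mul, map_mul, Complex.conj_ofReal, Complex.conj_I]
  congr 1
  push_cast
  ring

theorem conjTranspose_Fmat_mul_Fmat (N : ℕ) (ν : ℝ) :
    (Fmat N ν)ᴴ * Fmat N ν = (N : ℂ) • 1 := by
  ext j k
  simp only [mul_apply, conjTranspose_apply, star_Fmat_mul_Fmat_apply, Matrix.smul_apply]
  rw [Fin.sum_univ_eq_sum_range (fun t => (_ : ℂ) ^ t)]
  obtain rfl | hjk := eq_or_ne j k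
  · simp
  · have not_dvd : ¬ (N : ℤ) ∣ (j : ℤ) - k := by
      intro h
      have sub_eq_zero := Int.eq_zero_of_abs_lt_dvd h (by grind)
      omega
    rw [geom_sum_zpow_eq_zero_of_isPrimitiveRoot (Complex.isPrimitiveRoot_exp N j.pos.ne') not_dvd,
      one_apply_ne hjk, smul_zero]

section Inverse

variable [NeZero N] (ν : ℝ)

theorem inv_smul_conjTranspose_Fmat_mul_Fmat :
    ((N : ℂ)⁻¹ • (Fmat N ν)ᴴ) * Fmat N ν = 1 := by
  rw [smul_mul, conjTranspose_Fmat_mul_Fmat, inv_smul_smul₀ (NeZero.ne _)]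

theorem isUnit_det_Fmat : IsUnit (Fmat N ν).det :=
  isUnit_det_of_left_inverse (inv_smul_conjTranspose_Fmat_mul_Fmat ν)

theorem gridTransform_eq_inv_Fmat_mulVec (x : Fin N → ℝ) :
    gridTransform N ν x = (Fmat N ν)⁻¹ *ᵥ (Fmat N 0 *ᵥ fun k => (x k : ℂ)) := by
  rw [gridTransform, inv_eq_left_inv (inv_smul_conjTranspose_Fmat_mul_Fmat ν)]

end Inverse

theorem norm_Fmat_sub_Fmat_apply_le (μ ν : ℝ) (t k : Fin N) :
    ‖(Fmat N μ - Fmat N ν) t k‖ ≤ 2 * Real.pi * |μ - ν| / N * t := by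
  refine (norm_exp_mul_I_sub_exp_mul_I_le _ _).trans_eq ?_
  calc |-(2 * Real.pi * t * (k + μ) / N) - -(2 * Real.pi * t * (k + ν) / N)|
      = |-(2 * Real.pi / N * t) * (μ - ν)| := by ring_nf
    _ = 2 * Real.pi / N * t * |μ - ν| := by
      rw [abs_mul, abs_neg, abs_of_nonneg (by positivity)]
    _ = 2 * Real.pi * |μ - ν| / N * t := by ring

theorem norm_toLp_Fmat_sub_Fmat_mulVec_sq_le (μ ν : ℝ) (z : Fin N → ℂ) :
    ‖toLp 2 ((Fmat N μ - Fmat N ν) *ᵥ z)‖ ^ 2 ≤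
      N * (2 * Real.pi / √3 * |μ - ν| * ‖toLp 1 z‖) ^ 2 := by
  have sum_sq_le : ∑ t : Fin N, (t : ℝ) ^ 2 ≤ N ^ 3 / 3 := by
    rw [Fin.sum_univ_eq_sum_range (fun t => (t : ℝ) ^ 2), le_div_iff₀' (by norm_num)]
    exact_mod_cast succ_mul_sum_range_pow_le 2 N
  calc ‖toLp 2 ((Fmat N μ - Fmat N ν) *ᵥ z)‖ ^ 2
      ≤ (∑ t : Fin N, (2 * Real.pi * |μ - ν| / N * t) ^ 2) * ‖toLp 1 z‖ ^ 2 :=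
        norm_toLp_mulVec_sq_le_of_norm_row_le (norm_Fmat_sub_Fmat_apply_le μ ν) z
    _ = (2 * Real.pi * |μ - ν| / N) ^ 2 * (∑ t : Fin N, (t : ℝ) ^ 2) * ‖toLp 1 z‖ ^ 2 := by
      simp_rw [mul_pow, mul_sum]
    _ ≤ (2 * Real.pi * |μ - ν| / N) ^ 2 * (N ^ 3 / 3) * ‖toLp 1 z‖ ^ 2 := by gcongr
    _ = N * (2 * Real.pi / √3 * |μ - ν| * ‖toLp 1 z‖) ^ 2 := by
      simp only [mul_pow, div_pow, Real.sq_sqrt (show (0 : ℝ) ≤ 3 by norm_num)]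
      field_simp

theorem gridTransform_close_to_x_general [NeZero N] (μ ν : ℝ) (z : Fin N → ℂ) :
    ‖toLp 2 ((Fmat N ν)⁻¹ *ᵥ (Fmat N μ *ᵥ z) - z)‖ ≤
      2 * Real.pi / √3 * |μ - ν| * ‖toLp 1 z‖ := by
  set y := (Fmat N ν)⁻¹ *ᵥ (Fmat N μ *ᵥ z) - z
  have Fmat_mulVec_y : Fmat N ν *ᵥ y = (Fmat N μ - Fmat N ν) *ᵥ z := by
    rw [mulVec_sub, mulVec_mulVec, mul_nonsing_inv _ (isUnit_det_Fmat ν), one_mulVec, sub_mulVec]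
  have norm_y : ‖toLp 2 (Fmat N ν *ᵥ y)‖ ^ 2 = N * ‖toLp 2 y‖ ^ 2 :=
    norm_toLp_mulVec_sq_of_conjTranspose_mul_self
      (by simpa using conjTranspose_Fmat_mul_Fmat N ν) y
  have N_pos : (0 : ℝ) < N := mod_cast NeZero.pos N
  rw [← sq_le_sq₀ (norm_nonneg _) (by positivity), ← mul_le_mul_iff_right₀ N_pos, ← norm_y,
    Fmat_mulVec_y]
  exact norm_toLp_Fmat_sub_Fmat_mulVec_sq_le μ ν z

theorem norm_toLp_gridTransform_sub_le [NeZero N] (ν : ℝ) (x : Fin N → ℝ) :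
    ‖toLp 2 (gridTransform N ν x - fun k => (x k : ℂ))‖ ≤
      2 * Real.pi / √3 * |ν| * ∑ k, |x k| := by
  simpa [gridTransform_eq_inv_Fmat_mulVec, PiLp.norm_eq_of_L1] using
    gridTransform_close_to_x_general 0 ν fun k => (x k : ℂ)

end Fourier

/-- Writing `F_ν^{-1}(F x) = x^R + i x^I` with `x^R, x^I ∈ ℝ^N`, for `|ν| ≤ 1/2` one has
`‖x^I‖₂ ≤ (2π/√3)|ν|‖x‖₁` and `‖x^R − x‖₂ ≤ (2π/√3)|ν|‖x‖₁`. -/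
theorem gridTransform_close_to_x (N : ℕ) (hN : 0 < N) (x : Fin N → ℝ) (ν : ℝ)
    (hν : |ν| ≤ 1 / 2) :
    Real.sqrt (∑ n, ((gridTransform N ν x n).im)^2)
        ≤ 2 * Real.pi / Real.sqrt 3 * |ν| * ∑ k, |x k| ∧
    Real.sqrt (∑ n, ((gridTransform N ν x n).re - x n)^2)
        ≤ 2 * Real.pi / Real.sqrt 3 * |ν| * ∑ k, |x k| := by
  have : NeZero N := ⟨hN.ne'⟩
  have h := norm_toLp_gridTransform_sub_le ν x
  exact ⟨by simpa using (sqrt_sum_im_sq_le_norm_toLp _).trans h,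
    by simpa using (sqrt_sum_re_sq_le_norm_toLp _).trans h⟩
end

section
/- Let N ≥ 100 be an integer, let x ∈ ℝ^N have nonnegative entries, and let ν ∈ ℝ with |ν| ≤ 2/5. Set x^I := Im(F_ν^{−1}(F x)). Then ‖x^I‖₂² ≥ ν²·[(4 + 2π²/N)·‖x‖₂² − (2π²/N)·‖x‖₁²]. -/
open Matrix

/-!
Passing from `F x` to the transform of `F_ν⁻¹ (F x)` multiplies it by the phases
`exp (2πi t ν / N)`. For real `x`, the frequency `t ≠ 0` of the imaginary part is obtained by
antisymmetrizing the phases at `t` and `N - t`: it is `F x` at `t` times a number of modulus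
`|sin (π ν)|`, while the frequency `0` disappears. Parseval's identity then gives exactly
`‖x^I‖₂² = sin² (π ν) (‖x‖₂² - (∑ xₙ)² / N)`. Concavity of `sin` on `[0, 2π/5]` and
`sin (2π/5) ≥ 19/20` give `(19/8) |ν| ≤ |sin (π ν)| ≤ π |ν|`, and `(19/8)² (1 - 1/N) ≥ 4` for
`N ≥ 4`.
-/

open ZMod (stdAddChar)
open scoped ComplexConjugate FourierTransform

lemma norm_fourierChar_sub_one (r : ℝ) : ‖(𝐞 r - 1 : ℂ)‖ = 2 * |Real.sin (Real.pi * r)| := by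
  rw [Real.fourierChar_apply, mul_comm, Complex.norm_exp_I_mul_ofReal_sub_one,
    show 2 * Real.pi * r / 2 = Real.pi * r by ring, norm_mul, Real.norm_ofNat, Real.norm_eq_abs]

section FourierMatrix

variable {N : ℕ}

lemma natCast_val_zmod_inj {j k : Fin N} : ((j : ℕ) : ZMod N) = (k : ℕ) ↔ j = k := by
  rw [ZMod.natCast_eq_natCast_iff', Nat.mod_eq_of_lt j.2, Nat.mod_eq_of_lt k.2, Fin.val_inj]

lemma Fmat_apply_eq_fourierChar_mul (ν : ℝ) (t k : Fin N) :
    Fmat N ν t k = 𝐞 (-(t * ν / N)) * Fmat N 0 t k := by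
  simp only [Fmat, of_apply, Real.fourierChar_apply, ← Complex.exp_add]
  push_cast
  ring_nf

lemma Fmat_mulVec_apply_eq_fourierChar_mul (ν : ℝ) (z : Fin N → ℂ) (t : Fin N) :
    (Fmat N ν *ᵥ z) t = 𝐞 (-(t * ν / N)) * (Fmat N 0 *ᵥ z) t := by
  simp only [mulVec, dotProduct, Finset.mul_sum, Fmat_apply_eq_fourierChar_mul ν, mul_assoc]

variable [NeZero N]

lemma Fmat_zero_apply (t k : Fin N) :
    Fmat N 0 t k = stdAddChar (-((t : ℕ) * (k : ℕ)) : ZMod N) := by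
  have hcast : (-((t : ℕ) * (k : ℕ)) : ZMod N) = ((-(t * k) : ℤ) : ZMod N) := by push_cast; rfl
  rw [hcast, ZMod.stdAddChar_coe]
  simp only [Fmat, of_apply]
  push_cast
  ring_nf

lemma Fmat_zero_mulVec_apply_zero (z : Fin N → ℂ) : (Fmat N 0 *ᵥ z) 0 = ∑ k, z k := by
  simp [mulVec, dotProduct, Fmat_zero_apply]

lemma sum_stdAddChar_natCast_mul (a : ZMod N) :
    ∑ t : Fin N, stdAddChar ((t : ℕ) * a : ZMod N) = if a = 0 then (N : ℂ) else 0 := by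
  have hbij : Function.Bijective fun t : Fin N => ((t : ℕ) : ZMod N) := by
    refine (Fintype.bijective_iff_injective_and_card _).2 ⟨fun s t => ?_, by simp⟩
    exact natCast_val_zmod_inj.1
  rw [hbij.sum_comp fun s => stdAddChar (s * a),
    AddChar.sum_mulShift a (ZMod.isPrimitive_stdAddChar N), ZMod.card]
  push_cast
  rfl

lemma conjTranspose_Fmat_mul_self (ν : ℝ) : (Fmat N ν)ᴴ * Fmat N ν = (N : ℂ) • 1 := by
  ext j k
  have hterm (t : Fin N) : star (Fmat N ν t j) * Fmat N ν t k =
      stdAddChar ((t : ℕ) * ((j : ℕ) - (k : ℕ)) : ZMod N) := by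
    calc star (Fmat N ν t j) * Fmat N ν t k
        = star (Fmat N 0 t j) * Fmat N 0 t k := by
          have hphase : star (𝐞 (-(t * ν / N)) : ℂ) * 𝐞 (-(t * ν / N)) = 1 := by
            rw [Complex.star_def, Complex.conj_mul', Circle.norm_coe]
            norm_num
          rw [Fmat_apply_eq_fourierChar_mul ν t j, Fmat_apply_eq_fourierChar_mul ν t k, star_mul']
          linear_combination (star (Fmat N 0 t j) * Fmat N 0 t k) * hphase
      _ = stdAddChar ((t : ℕ) * ((j : ℕ) - (k : ℕ)) : ZMod N) := by
          rw [Fmat_zero_apply, Fmat_zero_apply, Complex.star_def, ← AddChar.map_neg_eq_conj,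
            ← AddChar.map_add_eq_mul]
          ring_nf
  simp only [mul_apply, conjTranspose_apply, hterm, sum_stdAddChar_natCast_mul, sub_eq_zero,
    natCast_val_zmod_inj, Matrix.smul_apply, one_apply, smul_eq_mul, mul_ite, mul_one, mul_zero]

lemma Fmat_mul_conjTranspose_self (ν : ℝ) : Fmat N ν * (Fmat N ν)ᴴ = (N : ℂ) • 1 := by
  have hN : (N : ℂ) ≠ 0 := NeZero.ne _
  have hleft : ((N : ℂ)⁻¹ • (Fmat N ν)ᴴ) * Fmat N ν = 1 := by
    rw [smul_mul, conjTranspose_Fmat_mul_self, inv_smul_smul₀ hN]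
  have hright := mul_eq_one_comm.1 hleft
  rwa [Matrix.mul_smul, inv_smul_eq_iff₀ hN] at hright

lemma sum_norm_sq_Fmat_mulVec (ν : ℝ) (z : Fin N → ℂ) :
    ∑ t, ‖(Fmat N ν *ᵥ z) t‖ ^ 2 = N * ∑ k, ‖z k‖ ^ 2 := by
  have hnorm (w : Fin N → ℂ) : star w ⬝ᵥ w = ((∑ t, ‖w t‖ ^ 2 : ℝ) : ℂ) := by
    simp [dotProduct, Complex.conj_mul']
  have hgram : star (Fmat N ν *ᵥ z) ⬝ᵥ (Fmat N ν *ᵥ z) = N * (star z ⬝ᵥ z) := by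
    rw [star_mulVec, ← dotProduct_mulVec, mulVec_mulVec, conjTranspose_Fmat_mul_self,
      smul_mulVec, one_mulVec, dotProduct_smul, smul_eq_mul]
  rw [hnorm, hnorm] at hgram
  exact_mod_cast hgram

lemma Fmat_zero_neg_apply (t k : Fin N) : Fmat N 0 (-t) k = conj (Fmat N 0 t k) := by
  have hneg : (((-t : Fin N) : ℕ) : ZMod N) = -((t : ℕ) : ZMod N) := by
    rw [Fin.val_neg', ZMod.natCast_mod, Nat.cast_sub t.2.le, ZMod.natCast_self, zero_sub]
  rw [Fmat_zero_apply, Fmat_zero_apply, ← AddChar.map_neg_eq_conj, hneg, neg_mul]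

lemma Fmat_zero_mulVec_conj (z : Fin N → ℂ) (t : Fin N) :
    (Fmat N 0 *ᵥ fun k => conj (z k)) t = conj ((Fmat N 0 *ᵥ z) (-t)) := by
  simp [mulVec, dotProduct, Fmat_zero_neg_apply]

lemma Fmat_zero_mulVec_ofReal_neg (x : Fin N → ℝ) (t : Fin N) :
    (Fmat N 0 *ᵥ fun k => (x k : ℂ)) (-t) = conj ((Fmat N 0 *ᵥ fun k => (x k : ℂ)) t) := by
  simp [mulVec, dotProduct, Fmat_zero_neg_apply]

lemma Fmat_zero_mulVec_im (z : Fin N → ℂ) (t : Fin N) :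
    (Fmat N 0 *ᵥ fun k => ((z k).im : ℂ)) t
      = ((Fmat N 0 *ᵥ z) t - conj ((Fmat N 0 *ᵥ z) (-t))) / (2 * Complex.I) := by
  have him : (fun k => ((z k).im : ℂ))
      = (2 * Complex.I)⁻¹ • (z - fun k => conj (z k)) := by
    ext k
    rw [Complex.im_eq_sub_conj, div_eq_inv_mul]
    rfl
  rw [him, mulVec_smul, mulVec_sub, Pi.smul_apply, Pi.sub_apply, Fmat_zero_mulVec_conj,
    smul_eq_mul, div_eq_inv_mul]

end FourierMatrix

section GridTransform

variable {N : ℕ} [NeZero N] (ν : ℝ) (x : Fin N → ℝ)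

lemma Fmat_mulVec_gridTransform :
    Fmat N ν *ᵥ gridTransform N ν x = Fmat N 0 *ᵥ fun k => (x k : ℂ) := by
  have hN : (N : ℂ) ≠ 0 := NeZero.ne _
  rw [gridTransform, mulVec_mulVec, Matrix.mul_smul, Fmat_mul_conjTranspose_self,
    inv_smul_smul₀ hN, one_mulVec]

lemma Fmat_zero_mulVec_gridTransform (t : Fin N) :
    (Fmat N 0 *ᵥ gridTransform N ν x) t
      = 𝐞 (t * ν / N) * (Fmat N 0 *ᵥ fun k => (x k : ℂ)) t := by
  rw [← Fmat_mulVec_gridTransform ν, Fmat_mulVec_apply_eq_fourierChar_mul ν, ← mul_assoc,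
    ← Circle.coe_mul, ← AddChar.map_add_eq_mul, add_neg_cancel, AddChar.map_zero_eq_one,
    Circle.coe_one, one_mul]

lemma Fmat_zero_mulVec_gridTransform_im (t : Fin N) :
    (Fmat N 0 *ᵥ fun k => ((gridTransform N ν x k).im : ℂ)) t
      = (𝐞 (t * ν / N) - 𝐞 (-((-t : Fin N) * ν / N))) / (2 * Complex.I)
        * (Fmat N 0 *ᵥ fun k => (x k : ℂ)) t := by
  rw [Fmat_zero_mulVec_im, Fmat_zero_mulVec_gridTransform, Fmat_zero_mulVec_gridTransform,
    Fmat_zero_mulVec_ofReal_neg, map_mul, Complex.conj_conj, Circle.starRingEnd_addChar]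
  ring

lemma norm_Fmat_zero_mulVec_gridTransform_im {t : Fin N} (ht : t ≠ 0) :
    ‖(Fmat N 0 *ᵥ fun k => ((gridTransform N ν x k).im : ℂ)) t‖
      = |Real.sin (Real.pi * ν)| * ‖(Fmat N 0 *ᵥ fun k => (x k : ℂ)) t‖ := by
  have hneg : -(((-t : Fin N) : ℕ) * ν / N) = t * ν / N + -ν := by
    have hN : (N : ℝ) ≠ 0 := NeZero.ne _
    rw [Fin.val_neg, if_neg ht, Nat.cast_sub t.2.le]
    field_simp
    ring
  have hfactor : (𝐞 (t * ν / N) - 𝐞 (-((-t : Fin N) * ν / N)) : ℂ)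
      = 𝐞 (t * ν / N + -ν) * (𝐞 ν - 1) := by
    rw [hneg, mul_sub, ← Circle.coe_mul, ← AddChar.map_add_eq_mul, neg_add_cancel_right, mul_one]
  rw [Fmat_zero_mulVec_gridTransform_im, hfactor, norm_mul, norm_div, norm_mul, Circle.norm_coe,
    norm_fourierChar_sub_one, norm_mul, Complex.norm_I, Complex.norm_ofNat]
  ring

lemma Fmat_zero_mulVec_gridTransform_im_zero :
    (Fmat N 0 *ᵥ fun k => ((gridTransform N ν x k).im : ℂ)) 0 = 0 := by
  simp [Fmat_zero_mulVec_gridTransform_im]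

theorem sum_sq_gridTransform_im :
    ∑ n, (gridTransform N ν x n).im ^ 2
      = Real.sin (Real.pi * ν) ^ 2 * (∑ n, x n ^ 2 - (∑ n, x n) ^ 2 / N) := by
  have hN : (N : ℝ) ≠ 0 := NeZero.ne _
  have hy := sum_norm_sq_Fmat_mulVec 0 fun n => ((gridTransform N ν x n).im : ℂ)
  have hx := sum_norm_sq_Fmat_mulVec 0 fun n => (x n : ℂ)
  rw [← Finset.add_sum_erase _ _ (Finset.mem_univ 0)] at hy hx
  have hscale : ∀ t ∈ Finset.univ.erase (0 : Fin N),
      ‖(Fmat N 0 *ᵥ fun n => ((gridTransform N ν x n).im : ℂ)) t‖ ^ 2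
        = Real.sin (Real.pi * ν) ^ 2 * ‖(Fmat N 0 *ᵥ fun n => (x n : ℂ)) t‖ ^ 2 := by
    intro t ht
    rw [norm_Fmat_zero_mulVec_gridTransform_im ν x (Finset.ne_of_mem_erase ht), mul_pow, sq_abs]
  rw [Finset.sum_congr rfl hscale, ← Finset.mul_sum,
    Fmat_zero_mulVec_gridTransform_im_zero] at hy
  rw [Fmat_zero_mulVec_apply_zero, ← Complex.ofReal_sum] at hx
  simp only [Complex.norm_real, Real.norm_eq_abs, sq_abs, norm_zero] at hy hx
  field_simp
  linear_combination Real.sin (Real.pi * ν) ^ 2 * hx - hy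

end GridTransform

lemma mul_abs_le_abs_sin_pi_mul {v : ℝ} (hv : |v| ≤ 2 / 5) :
    19 / 8 * |v| ≤ |Real.sin (Real.pi * v)| := by
  have hendpoint : 19 / 20 ≤ Real.sin (2 * Real.pi / 5) := by
    have h := Real.one_sub_sq_div_two_le_cos (x := Real.pi / 10)
    rw [← Real.sin_pi_div_two_sub, show Real.pi / 2 - Real.pi / 10 = 2 * Real.pi / 5 by ring] at h
    nlinarith [Real.pi_lt_d2, Real.pi_pos]
  have hchord : 5 / 2 * |v| * Real.sin (2 * Real.pi / 5) ≤ Real.sin (Real.pi * |v|) := by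
    have h := strictConcaveOn_sin_Icc.concaveOn.2 ⟨le_rfl, Real.pi_pos.le⟩
      (⟨by positivity, by linarith [Real.pi_pos]⟩ : 2 * Real.pi / 5 ∈ Set.Icc 0 Real.pi)
      (by linarith : 0 ≤ 1 - 5 / 2 * |v|) (by positivity : 0 ≤ 5 / 2 * |v|) (by ring)
    simp only [smul_eq_mul, Real.sin_zero, mul_zero, zero_add] at h
    rwa [show 5 / 2 * |v| * (2 * Real.pi / 5) = Real.pi * |v| by ring] at h
  calc 19 / 8 * |v| = 5 / 2 * |v| * (19 / 20) := by ring
    _ ≤ 5 / 2 * |v| * Real.sin (2 * Real.pi / 5) := by gcongr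
    _ ≤ Real.sin (Real.pi * |v|) := hchord
    _ ≤ |Real.sin (Real.pi * |v|)| := le_abs_self _
    _ = |Real.sin (Real.pi * v)| := by
      rcases abs_choice v with h | h <;> simp [h]

lemma four_mul_sq_le_mul_sin_pi_mul_sq {N : ℕ} (hN : 4 ≤ N) {v : ℝ} (hv : |v| ≤ 2 / 5) :
    4 * v ^ 2 ≤ Real.sin (Real.pi * v) ^ 2 * (1 - 1 / N) := by
  have hsin : (19 / 8) ^ 2 * v ^ 2 ≤ Real.sin (Real.pi * v) ^ 2 := by
    rw [← sq_abs v, ← sq_abs (Real.sin _), ← mul_pow]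
    gcongr
    exact mul_abs_le_abs_sin_pi_mul hv
  have hinv : (1 / N : ℝ) ≤ 1 / 4 := by
    gcongr
    exact_mod_cast hN
  nlinarith [sq_nonneg v]

theorem gridTransform_im_lower_bound_general (N : ℕ) (hN : 4 ≤ N) (x : Fin N → ℝ) (ν : ℝ)
    (hν : |ν| ≤ 2 / 5) :
    ν^2 * ((4 + 2 * Real.pi^2 / (N : ℝ)) * ∑ n, (x n)^2
        - 2 * Real.pi^2 / (N : ℝ) * (∑ n, |x n|)^2)
      ≤ ∑ n, ((gridTransform N ν x n).im)^2 := by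
  have : NeZero N := ⟨by lia⟩
  have hsum : (∑ n, x n) ^ 2 ≤ (∑ n, |x n|) ^ 2 :=
    sq_le_sq.2 ((Finset.abs_sum_le_sum_abs _ _).trans (le_abs_self _))
  have hsum_sq : ∑ n, x n ^ 2 ≤ (∑ n, |x n|) ^ 2 := by
    simpa only [sq_abs] using Finset.sum_sq_le_sq_sum_of_nonneg fun n _ => abs_nonneg (x n)
  have hlower := four_mul_sq_le_mul_sin_pi_mul_sq hN hν
  have hupper : Real.sin (Real.pi * ν) ^ 2 ≤ 2 * Real.pi ^ 2 * ν ^ 2 := by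
    have := Real.sin_sq_le_sq (x := Real.pi * ν)
    nlinarith [sq_nonneg (Real.pi * ν)]
  rw [sum_sq_gridTransform_im]
  set s := Real.sin (Real.pi * ν) ^ 2
  calc _ = 4 * ν ^ 2 * ∑ n, x n ^ 2
        - 2 * Real.pi ^ 2 * ν ^ 2 / N * ((∑ n, |x n|) ^ 2 - ∑ n, x n ^ 2) := by ring
    _ ≤ s * (1 - 1 / N) * ∑ n, x n ^ 2 - s / N * ((∑ n, |x n|) ^ 2 - ∑ n, x n ^ 2) := by
      gcongr
    _ = s * (∑ n, x n ^ 2 - (∑ n, |x n|) ^ 2 / N) := by ring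
    _ ≤ s * (∑ n, x n ^ 2 - (∑ n, x n) ^ 2 / N) := by gcongr

/-- For `N ≥ 100`, nonnegative `x ∈ ℝ^N`, `|ν| ≤ 2/5`, and `x^I = Im(F_ν^{-1}(F x))`,
`‖x^I‖₂² ≥ ν²[(4 + 2π²/N)‖x‖₂² − (2π²/N)‖x‖₁²]`. -/
theorem gridTransform_im_lower_bound (N : ℕ) (hN : 100 ≤ N) (x : Fin N → ℝ)
    (hx : ∀ n, 0 ≤ x n) (ν : ℝ) (hν : |ν| ≤ 2 / 5) :
    ν^2 * ((4 + 2 * Real.pi^2 / (N : ℝ)) * ∑ n, (x n)^2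
        - 2 * Real.pi^2 / (N : ℝ) * (∑ n, |x n|)^2)
      ≤ ∑ n, ((gridTransform N ν x n).im)^2 :=
  gridTransform_im_lower_bound_general N (by lia) x ν hν
end
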